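/- Let F be a field of characteristic zero, τ : F → F a ring homomorphism, k := F^τ its fixed field, K a subfield of F with τ(K) ⊆ K and k ⊆ K, and ∂ : F → F a derivation with ∂ ∘ τ = τ ∘ ∂ and ∂(K) ⊆ K. Let f ∈ K be nonzero and let z ∈ F satisfy τ(z) = z + f. Then the following are equivalent: (1) there exist n ≥ 0, λ₀, …, λₙ ∈ k, not all zero, and g ∈ K such that λ₀f + λ₁∂(f) + ⋯ + λₙ∂ⁿ(f) = τ(g) − g; (2) there exist n ≥ 0 and λ₀, …, λₙ ∈ k, not all zero, such that λ₀z + λ₁∂(z) + ⋯ + λₙ∂ⁿ(z) ∈ K; (3) z is D-finite over K; (4) z is differentially algebraic over K. -/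

import Mathlib

set_option synthInstance.maxHeartbeats 400000
set_option maxHeartbeats 1000000

/-!
The endomorphism `τ` lifts along evaluation at `(z, ∂z, …, ∂ⁿz)` to the endomorphism of
`K[X₀, …, Xₙ]` that acts on coefficients by `τ` and sends `Xᵢ` to `Xᵢ + ∂ⁱf`, so the ideal of
algebraic relations over `K` is stable under this shift. A monic relation with the least leading
monomial is invariant, because its image minus itself is a relation with a smaller leading monomial.
Partial derivatives commute with the shift, so a nonconstant invariant of least total degree has
constant, hence `τ`-fixed, partial derivatives `cᵢ`. In characteristic zero it is `a + ∑ cᵢ Xᵢ`, and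
its invariance says `∑ cᵢ ∂ⁱf = τ(-a) - (-a)`. In the other direction, such an equation makes
`∑ cᵢ ∂ⁱz + a` fixed by `τ`, hence an element of `K`; and if `L z = w` with `w ∈ K` nonzero, then
`w ∂L - w′ L` is an operator of order one more than `L` that annihilates `z`.
-/

section PartialDerivatives

open MvPolynomial

variable {R ι : Type*} [CommSemiring R]

theorem totalDegree_pderiv_lt {i : ι} {P : MvPolynomial ι R} (h : pderiv i P ≠ 0) :
    (pderiv i P).totalDegree < P.totalDegree := by
  obtain ⟨s, hs, hdeg⟩ :=
    Finset.exists_mem_eq_sup _ (support_nonempty.2 h) fun s ↦ s.sum fun _ ↦ id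
  have hcoeff : coeff (s + Finsupp.single i 1) P ≠ 0 := fun h0 ↦
    mem_support_iff.1 hs (by rw [coeff_pderiv, h0, zero_mul])
  calc (pderiv i P).totalDegree = s.sum fun _ ↦ id := hdeg
    _ < (s + Finsupp.single i 1).sum fun _ ↦ id := by
      rw [Finsupp.sum_add_index' (fun _ ↦ rfl) fun _ _ _ ↦ rfl, Finsupp.sum_single_index rfl]
      exact Nat.lt_succ_self _
    _ ≤ P.totalDegree := le_totalDegree (mem_support_iff.2 hcoeff)

theorem eq_C_of_forall_pderiv_eq_zero [NoZeroDivisors R] [CharZero R] {P : MvPolynomial ι R}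
    (h : ∀ i, pderiv i P = 0) : P = C (coeff 0 P) := by
  classical
  ext s
  rw [coeff_C]
  split_ifs with hs
  · rw [hs]
  · obtain ⟨i, hi⟩ : ∃ i, s i ≠ 0 := by
      simpa using Finsupp.ne_iff.1 (Ne.symm hs)
    have hcoeff := congrArg (coeff (s - Finsupp.single i 1)) (h i)
    rw [coeff_pderiv, Finsupp.sub_add_single_one_cancel hi, coeff_zero, mul_eq_zero] at hcoeff
    exact hcoeff.resolve_right (Nat.cast_add_one_ne_zero _)

theorem eq_C_add_sum_of_forall_pderiv_eq_C {S : Type*} [CommRing S] [NoZeroDivisors S]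
    [CharZero S] [Fintype ι] {P : MvPolynomial ι S} {c : ι → S}
    (h : ∀ i, pderiv i P = C (c i)) : P = C (coeff 0 P) + ∑ i, C (c i) * X i := by
  classical
  have hconst := eq_C_of_forall_pderiv_eq_zero (P := P - ∑ i, C (c i) * X i) fun i ↦ by
    simp [h, pderiv_X, Pi.single_apply]
  have hcoeff : coeff 0 (P - ∑ i, C (c i) * X i) = coeff 0 P := by simp [coeff_sum]
  rwa [hcoeff, sub_eq_iff_eq_add] at hconst

end PartialDerivatives

section TwistedShift

open MvPolynomial

variable {R ι : Type*} [CommSemiring R]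

/-- The ring endomorphism of `R[Xᵢ : i ∈ ι]` that acts on coefficients by `σ` and sends `Xᵢ` to
`Xᵢ + fᵢ`. It lifts `τ` along evaluation at a family `z` with `τ zᵢ = zᵢ + fᵢ`. -/
noncomputable def twistedShift (σ : R →+* R) (f : ι → R) : MvPolynomial ι R →+* MvPolynomial ι R :=
  eval₂Hom (C.comp σ) fun i ↦ X i + C (f i)

variable (σ : R →+* R) (f : ι → R)

@[simp]
theorem twistedShift_C (a : R) : twistedShift σ f (C a) = C (σ a) :=
  eval₂Hom_C _ _ _

@[simp]
theorem twistedShift_X (i : ι) : twistedShift σ f (X i) = X i + C (f i) :=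
  eval₂Hom_X' _ _ _

theorem aeval_twistedShift {S : Type*} [CommSemiring S] [Algebra R S] {σ : R →+* R} {f : ι → R}
    {τ : S →+* S} (hσ : ∀ a, τ (algebraMap R S a) = algebraMap R S (σ a))
    {z : ι → S} (hz : ∀ i, τ (z i) = z i + algebraMap R S (f i)) (P : MvPolynomial ι R) :
    aeval z (twistedShift σ f P) = τ (aeval z P) := by
  induction P using MvPolynomial.induction_on with
  | C a => simp [hσ]
  | add P Q hP hQ => simp [hP, hQ]
  | mul_X P i hP => simp [hP, hz]

theorem pderiv_twistedShift (i : ι) (P : MvPolynomial ι R) :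
    pderiv i (twistedShift σ f P) = twistedShift σ f (pderiv i P) := by
  classical
  induction P using MvPolynomial.induction_on with
  | C a => simp
  | add P Q hP hQ => simp [hP, hQ]
  | mul_X P j hP =>
    obtain rfl | hj := eq_or_ne j i
    · simp [hP]
    · simp [hP, hj]

end TwistedShift

section LeadingTerm

open MvPolynomial
open scoped MonomialOrder

variable {R ι : Type*} [CommRing R] (σ : R →+* R) (f : ι → R) (m : MonomialOrder ι)

theorem monic_twistedShift_monomial_one (s : ι →₀ ℕ) :
    m.Monic (twistedShift σ f (monomial s 1)) := by
  rw [twistedShift, eval₂Hom_monomial, map_one, one_mul]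
  exact MonomialOrder.Monic.prod fun i _ ↦ (m.monic_X_add_C i (f i)).pow

theorem degree_twistedShift_monomial_one [Nontrivial R] (s : ι →₀ ℕ) :
    m.degree (twistedShift σ f (monomial s 1)) = s := by
  have hmonic (i : ι) : m.Monic (X i + C (f i)) := m.monic_X_add_C i (f i)
  have hdegree (i : ι) : m.degree ((X i + C (f i)) ^ s i) = Finsupp.single i (s i) := by
    rw [m.degree_pow_of_pow_leadingCoeff_ne_zero (by simp [(hmonic i).leadingCoeff_eq_one]),
      m.degree_X_add_C, Finsupp.smul_single_one]
  rw [twistedShift, eval₂Hom_monomial, map_one, one_mul, Finsupp.prod,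
    m.degree_prod_of_regular fun i _ ↦ (hmonic i).pow.leadingCoeff_eq_one ▸ isRegular_one]
  simp only [hdegree]
  exact s.sum_single

theorem coeff_twistedShift_monomial {s t : ι →₀ ℕ} (hst : s ≼[m] t) (a : R) :
    coeff t (twistedShift σ f (monomial s a)) = σ (coeff t (monomial s a)) := by
  classical
  nontriviality R
  rw [← mul_one a, ← C_mul_monomial, map_mul, twistedShift_C, coeff_C_mul, coeff_C_mul, map_mul,
    coeff_monomial]
  congr 1
  split_ifs with h
  · have hmonic := (monic_twistedShift_monomial_one σ f m s).coeff_degree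
    rw [degree_twistedShift_monomial_one] at hmonic
    rw [← h, hmonic, map_one]
  · rw [map_zero]
    refine m.coeff_eq_zero_of_lt ?_
    rw [degree_twistedShift_monomial_one]
    exact lt_of_le_of_ne hst (m.toSyn.injective.ne h)

theorem coeff_twistedShift_of_degree_le {P : MvPolynomial ι R} {t : ι →₀ ℕ}
    (ht : m.degree P ≼[m] t) : coeff t (twistedShift σ f P) = σ (coeff t P) := by
  conv_lhs => rw [P.as_sum]
  conv_rhs => rw [P.as_sum]
  simp only [map_sum, coeff_sum]
  exact Finset.sum_congr rfl fun s hs ↦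
    coeff_twistedShift_monomial σ f m ((m.le_degree hs).trans ht) _

theorem degree_twistedShift_sub_self_lt {P : MvPolynomial ι R} (hP : m.Monic P)
    (hne : twistedShift σ f P - P ≠ 0) :
    m.degree (twistedShift σ f P - P) ≺[m] m.degree P := by
  by_contra! hle
  refine m.coeff_degree_ne_zero_iff.2 hne ?_
  rw [coeff_sub, coeff_twistedShift_of_degree_le σ f m hle]
  obtain heq | hlt := hle.eq_or_lt
  · rw [← m.toSyn.injective heq, hP.coeff_degree, map_one, sub_self]
  · rw [m.coeff_eq_zero_of_lt hlt, map_zero, sub_self]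

end LeadingTerm

section Ostrowski

open MvPolynomial

theorem exists_twistedShift_eq_self_of_le_comap {R ι : Type*} [Field R] (m : MonomialOrder ι)
    {σ : R →+* R} {f : ι → R} {I : Ideal (MvPolynomial ι R)} (hI : I ≠ ⊥)
    (hstable : I ≤ I.comap (twistedShift σ f)) :
    ∃ P ∈ I, P ≠ 0 ∧ twistedShift σ f P = P := by
  obtain ⟨P, ⟨hPI, hP0⟩, hmin⟩ := exists_minimalFor_of_wellFoundedLT
    (fun P ↦ P ∈ I ∧ P ≠ 0) (fun P ↦ m.toSyn (m.degree P))
    (Submodule.exists_mem_ne_zero_of_ne_bot hI)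
  have hlead : m.leadingCoeff P ≠ 0 := m.leadingCoeff_ne_zero_iff.2 hP0
  let Q := (m.leadingCoeff P)⁻¹ • P
  have hQI : Q ∈ I := I.smul_of_tower_mem _ hPI
  have hQdeg : m.degree Q = m.degree P :=
    m.degree_smul_of_isRegular (IsRegular.of_ne_zero (inv_ne_zero hlead))
  have hQmonic : m.Monic Q := by
    rw [MonomialOrder.Monic, MonomialOrder.leadingCoeff, hQdeg, coeff_smul]
    exact inv_mul_cancel₀ hlead
  refine ⟨Q, hQI, hQmonic.ne_zero, ?_⟩
  by_contra hne
  have hlt := degree_twistedShift_sub_self_lt σ f m hQmonic (sub_ne_zero.2 hne)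
  rw [hQdeg] at hlt
  exact hlt.not_ge (hmin ⟨I.sub_mem (hstable hQI) hQI, sub_ne_zero.2 hne⟩ hlt.le)

theorem exists_fixed_sum_eq_of_twistedShift_eq_self {R ι : Type*} [CommRing R] [NoZeroDivisors R]
    [CharZero R] [Fintype ι] {σ : R →+* R} {f : ι → R} {P : MvPolynomial ι R}
    (hP : twistedShift σ f P = P) (hnonconst : ∀ a, P ≠ C a) :
    ∃ c : ι → R, (∀ i, σ (c i) = c i) ∧ (∃ i, c i ≠ 0) ∧ ∃ g, ∑ i, c i * f i = σ g - g := by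
  obtain ⟨P, ⟨hP, hnonconst⟩, hmin⟩ := exists_minimalFor_of_wellFoundedLT
    (fun P ↦ twistedShift σ f P = P ∧ ∀ a, P ≠ C a) totalDegree ⟨P, hP, hnonconst⟩
  have hpderiv_inv (i : ι) : twistedShift σ f (pderiv i P) = pderiv i P := by
    rw [← pderiv_twistedShift, hP]
  have hpderiv_const (i : ι) : ∃ a, pderiv i P = C a := by
    by_contra! h
    have hlt := totalDegree_pderiv_lt fun h0 ↦ h 0 (by rw [h0, map_zero])
    exact hlt.not_ge (hmin ⟨hpderiv_inv i, h⟩ hlt.le)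
  choose c hc using hpderiv_const
  have hfixed (i : ι) : σ (c i) = c i :=
    C_injective ι R (by rw [← twistedShift_C σ f, ← hc, hpderiv_inv])
  have hlinear := eq_C_add_sum_of_forall_pderiv_eq_C hc
  refine ⟨c, hfixed, ?_, -coeff 0 P, ?_⟩
  · by_contra! h
    exact hnonconst _ (eq_C_of_forall_pderiv_eq_zero fun i ↦ by rw [hc, h, map_zero])
  · have hcoeff : σ (coeff 0 P) + ∑ i, c i * f i = coeff 0 P := by
      have h0 := congrArg (coeff 0) hP
      conv_lhs at h0 => rw [hlinear]
      simpa [coeff_sum, mul_add, hfixed, Finset.sum_add_distrib] using h0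
    rw [map_neg]
    linear_combination hcoeff

theorem exists_fixed_sum_eq_of_not_algebraicIndependent {R S ι : Type*} [Field R] [CharZero R]
    [CommRing S] [Nontrivial S] [Algebra R S] [Fintype ι] {σ : R →+* R} {f : ι → R}
    {τ : S →+* S} (hσ : ∀ a, τ (algebraMap R S a) = algebraMap R S (σ a))
    {z : ι → S} (hz : ∀ i, τ (z i) = z i + algebraMap R S (f i))
    (hdep : ¬ AlgebraicIndependent R z) :
    ∃ c : ι → R, (∀ i, σ (c i) = c i) ∧ (∃ i, c i ≠ 0) ∧ ∃ g, ∑ i, c i * f i = σ g - g := by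
  let _ : LinearOrder ι := LinearOrder.lift' (Fintype.equivFin ι) (Fintype.equivFin ι).injective
  have hker : RingHom.ker (aeval (R := R) z) ≠ ⊥ :=
    mt algebraicIndependent_iff_ker_eq_bot.2 hdep
  obtain ⟨P, hPker, hP0, hP⟩ := exists_twistedShift_eq_self_of_le_comap MonomialOrder.lex
    (σ := σ) (f := f) hker fun P hP ↦ by
      rw [Ideal.mem_comap, RingHom.mem_ker, aeval_twistedShift hσ hz, hP, map_zero]
  refine exists_fixed_sum_eq_of_twistedShift_eq_self hP ?_
  rintro a rfl
  rw [RingHom.mem_ker, aeval_C, map_eq_zero] at hPker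
  exact hP0 (by rw [hPker, map_zero])

theorem exists_fixed_sum_eq_of_not_algebraicIndependent_subfield {F ι : Type*} [Field F]
    [CharZero F] [Fintype ι] {K : Subfield F} {τ : F →+* F} (hτK : ∀ a ∈ K, τ a ∈ K)
    {z f : ι → F} (hf : ∀ i, f i ∈ K) (hz : ∀ i, τ (z i) = z i + f i)
    (hdep : ¬ AlgebraicIndependent K z) :
    ∃ c : ι → F, (∀ i, τ (c i) = c i) ∧ (∃ i, c i ≠ 0) ∧
      ∃ g ∈ K, ∑ i, c i * f i = τ g - g := by
  lift f to ι → K using hf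
  obtain ⟨c, hfixed, ⟨i, hi⟩, g, hg⟩ := exists_fixed_sum_eq_of_not_algebraicIndependent
    (σ := τ.restrict K K hτK) (fun _ ↦ rfl) hz hdep
  refine ⟨fun i ↦ c i, fun i ↦ congrArg Subtype.val (hfixed i), ⟨i, by simpa using hi⟩, g, g.2, ?_⟩
  simpa using congrArg Subtype.val hg

end Ostrowski

section DifferentialOperators

open Polynomial Differential

variable {K F : Type*} [CommRing K] [CommRing F] [Algebra K F] [Differential F]

variable (K) in
/-- The value at `z` of the linear differential operator `∑ aᵢ ∂ⁱ` over `K`, encoded as the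
polynomial `∑ aᵢ Xⁱ`. Multiplication in `K[X]` is not composition of operators. -/
noncomputable def diffOpEval (z : F) : K[X] →ₗ[K] F :=
  Polynomial.lsum fun i ↦ LinearMap.toSpanSingleton K F (Differential.deriv^[i] z)

@[simp]
theorem diffOpEval_monomial (z : F) (i : ℕ) (a : K) :
    diffOpEval K z (monomial i a) = a • Differential.deriv^[i] z := by
  simp [diffOpEval]

theorem deriv_diffOpEval [Differential K] [DifferentialAlgebra K F] (z : F) (p : K[X]) :
    (diffOpEval K z p)′ = diffOpEval K z (mapCoeffs p + X * p) := by
  induction p using Polynomial.induction_on' with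
  | add p q hp hq => simp only [map_add, mul_add, hp, hq, add_add_add_comm]
  | monomial i a =>
    simp only [mapCoeffs_monomial, X_mul_monomial, map_add, diffOpEval_monomial, Algebra.smul_def,
      Derivation.leibniz, Algebra.algebraMap_self_apply, deriv_algebraMap,
      Function.iterate_succ_apply']
    ring

theorem exists_diffOpEval_eq_zero_of_eq_algebraMap [NoZeroDivisors K] [Differential K]
    [DifferentialAlgebra K F] {z : F} {p : K[X]} (hp : p ≠ 0) {w : K}
    (hw : diffOpEval K z p = algebraMap K F w) :
    ∃ q : K[X], q ≠ 0 ∧ diffOpEval K z q = 0 := by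
  obtain rfl | hw0 := eq_or_ne w 0
  · exact ⟨p, hp, by rw [hw, map_zero]⟩
  refine ⟨w • (mapCoeffs p + X * p) - w′ • p, fun hq ↦ ?_, ?_⟩
  · have hlead := congrArg (coeff · (p.natDegree + 1)) hq
    simp [coeff_mapCoeffs, hw0, hp] at hlead
  · rw [map_sub, map_smul, map_smul, ← deriv_diffOpEval, hw, deriv_algebraMap]
    simp only [Algebra.smul_def]
    ring

theorem diffOpEval_ofFn [DecidableEq K] (z : F) {n : ℕ} (a : Fin n → K) :
    diffOpEval K z (ofFn n a) = ∑ i, a i • Differential.deriv^[(i : ℕ)] z := by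
  simp only [ofFn_eq_sum_monomial, map_sum, diffOpEval_monomial]

end DifferentialOperators

section DifferentialSubfield

open Polynomial Differential

variable {F : Type*} [Field F] [Differential F] {K : Subfield F}

theorem exists_sum_iterate_deriv_iff_exists_diffOpEval (z : F) (p : F → Prop) :
    (∃ n : ℕ, ∃ a : Fin (n + 1) → F, (∀ i, a i ∈ K) ∧ (∃ i, a i ≠ 0) ∧
      p (∑ i, a i * Differential.deriv^[(i : ℕ)] z)) ↔
    ∃ q : K[X], q ≠ 0 ∧ p (diffOpEval K z q) := by
  classical
  constructor
  · rintro ⟨n, a, ha, ⟨i, hi⟩, hp⟩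
    lift a to Fin (n + 1) → K using ha
    refine ⟨ofFn (n + 1) a, fun h ↦ hi ?_, by rwa [diffOpEval_ofFn]⟩
    rw [(map_eq_zero_iff _ (injective_ofFn _)).1 h]
    rfl
  · rintro ⟨q, hq, hp⟩
    rw [← ofFn_comp_toFn_eq_id_of_natDegree_lt q.natDegree.lt_succ_self, diffOpEval_ofFn] at hp
    exact ⟨q.natDegree, fun i ↦ q.coeff i, fun i ↦ (q.coeff i).2,
      ⟨Fin.last _, by simpa using hq⟩, hp⟩

/-- The derivation of a differential field restricted to a subfield that it preserves. -/
abbrev differentialSubfield (hK : ∀ x ∈ K, x′ ∈ K) : Differential K where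
  deriv := Derivation.mk'
    (AddMonoidHom.mk' (fun x : K ↦ (⟨(x : F)′, hK x x.2⟩ : K))
      fun x y ↦ Subtype.ext (map_add _ (x : F) y)).toIntLinearMap
    fun x y ↦ Subtype.ext (Derivation.leibniz _ (x : F) y)

theorem exists_sum_iterate_deriv_eq_zero_of_mem (hK : ∀ x ∈ K, x′ ∈ K) {z : F}
    (h : ∃ n : ℕ, ∃ a : Fin (n + 1) → F, (∀ i, a i ∈ K) ∧ (∃ i, a i ≠ 0) ∧
      ∑ i, a i * Differential.deriv^[(i : ℕ)] z ∈ K) :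
    ∃ n : ℕ, ∃ a : Fin (n + 1) → F, (∀ i, a i ∈ K) ∧ (∃ i, a i ≠ 0) ∧
      ∑ i, a i * Differential.deriv^[(i : ℕ)] z = 0 := by
  let _ : Differential K := differentialSubfield hK
  have _ : DifferentialAlgebra K F := ⟨fun _ ↦ rfl⟩
  obtain ⟨p, hp, hmem⟩ := (exists_sum_iterate_deriv_iff_exists_diffOpEval z (· ∈ K)).1 h
  exact (exists_sum_iterate_deriv_iff_exists_diffOpEval z (· = 0)).2
    (exists_diffOpEval_eq_zero_of_eq_algebraMap hp (w := ⟨_, hmem⟩) rfl)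

end DifferentialSubfield

theorem exists_differential_coe_deriv_eq {R : Type*} [CommRing R] {del : R → R}
    (hadd : ∀ x y, del (x + y) = del x + del y)
    (hmul : ∀ x y, del (x * y) = x * del y + del x * y) :
    ∃ _ : Differential R, ⇑(Differential.deriv (R := R)) = del :=
  ⟨⟨Derivation.mk' (AddMonoidHom.mk' del hadd).toIntLinearMap fun x y ↦ by
    simp [hmul, mul_comm]⟩, rfl⟩

theorem map_iterate_eq_add_of_commute {M G : Type*} [AddMonoid M] [FunLike G M M]
    [AddMonoidHomClass G M M] {D : G} {τ : M → M} (hcomm : Function.Commute D τ) {z f : M}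
    (hz : τ z = z + f) (n : ℕ) : τ (D^[n] z) = D^[n] z + D^[n] f := by
  rw [← (hcomm.iterate_left n).eq, hz, iterate_map_add]

theorem map_sum_mul_sub_eq_self {R ι : Type*} [Ring R] [Fintype ι] {τ : R →+* R}
    {c z f : ι → R} {g : R} (hc : ∀ i, τ (c i) = c i) (hz : ∀ i, τ (z i) = z i + f i)
    (hg : ∑ i, c i * f i = τ g - g) :
    τ (∑ i, c i * z i - g) = ∑ i, c i * z i - g := by
  simp only [map_sub, map_sum, map_mul, hc, hz, mul_add, Finset.sum_add_distrib, hg]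
  abel

theorem not_algebraicIndependent_of_sum_mul_eq_zero {F ι : Type*} [Field F] [Fintype ι]
    {K : Subfield F} {a z : ι → F} (ha : ∀ i, a i ∈ K) (hne : ∃ i, a i ≠ 0)
    (hsum : ∑ i, a i * z i = 0) : ¬ AlgebraicIndependent K z := by
  lift a to ι → K using ha
  obtain ⟨i, hi⟩ := hne
  intro hind
  exact hi (congrArg Subtype.val (Fintype.linearIndependent_iff.1 hind.linearIndependent a hsum i))

/-- Characterization of differential algebraicity over `K` of a solution `z ∈ F` of the
inhomogeneous difference equation `τ(z) = z + f` with `f ∈ K*`, in the presence of a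
derivation `del` commuting with `τ`. -/
theorem differential_algebraicity_inhomogeneous
    (F : Type*) [Field F] [CharZero F] (τ : F →+* F)
    (k : Subfield F) (hk : ∀ a : F, a ∈ k ↔ τ a = a)
    (K : Subfield F) (hkK : (k : Set F) ⊆ (K : Set F)) (hτK : ∀ a ∈ K, τ a ∈ K)
    (del : F → F)
    (hdeladd : ∀ x y : F, del (x + y) = del x + del y)
    (hdelmul : ∀ x y : F, del (x * y) = x * del y + del x * y)
    (hdelτ : ∀ x : F, del (τ x) = τ (del x))
    (hdelK : ∀ x ∈ K, del x ∈ K)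
    (f : F) (hfK : f ∈ K) (hf0 : f ≠ 0)
    (z : F) (hz : τ z = z + f) :
    List.TFAE
      [ ∃ n : ℕ, ∃ lam : Fin (n + 1) → F, (∀ i, lam i ∈ k) ∧ (∃ i, lam i ≠ 0) ∧
          ∃ g ∈ K, ∑ i : Fin (n + 1), lam i * del^[(i : ℕ)] f = τ g - g,
        ∃ n : ℕ, ∃ lam : Fin (n + 1) → F, (∀ i, lam i ∈ k) ∧ (∃ i, lam i ≠ 0) ∧
          (∑ i : Fin (n + 1), lam i * del^[(i : ℕ)] z) ∈ K,
        ∃ n : ℕ, ∃ a : Fin (n + 1) → F, (∀ i, a i ∈ K) ∧ (∃ i, a i ≠ 0) ∧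
          ∑ i : Fin (n + 1), a i * del^[(i : ℕ)] z = 0,
        ∃ n : ℕ, ¬ AlgebraicIndependent K (fun i : Fin (n + 1) => del^[(i : ℕ)] z) ] := by
  obtain ⟨_, rfl⟩ := exists_differential_coe_deriv_eq hdeladd hdelmul
  have hτz := map_iterate_eq_add_of_commute hdelτ hz
  have hfK' (i : ℕ) : Differential.deriv^[i] f ∈ K := Set.MapsTo.iterate hdelK i hfK
  tfae_have 1 → 2 := by
    rintro ⟨n, lam, hlam, hne, g, hg, hfg⟩
    have hfixed := map_sum_mul_sub_eq_self (fun i ↦ (hk _).1 (hlam i)) (fun i ↦ hτz i) hfg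
    exact ⟨n, lam, hlam, hne, by simpa using K.add_mem (hkK ((hk _).2 hfixed)) hg⟩
  tfae_have 2 → 3 := fun ⟨n, lam, hlam, hne, hmem⟩ ↦
    exists_sum_iterate_deriv_eq_zero_of_mem hdelK ⟨n, lam, fun i ↦ hkK (hlam i), hne, hmem⟩
  tfae_have 3 → 4 := fun ⟨n, a, ha, hne, hsum⟩ ↦
    ⟨n, not_algebraicIndependent_of_sum_mul_eq_zero ha hne hsum⟩
  tfae_have 4 → 1 := by
    rintro ⟨n, hdep⟩
    obtain ⟨c, hc, hne, hg⟩ := exists_fixed_sum_eq_of_not_algebraicIndependent_subfield hτK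
      (fun i ↦ hfK' _) (fun i ↦ hτz _) hdep
    exact ⟨n, c, fun i ↦ (hk _).2 (hc i), hne, hg⟩
  tfae_finish
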